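/- arXiv:1608.08184 — 5 statements merged into one kernel-verified Lean document; each statement's English description precedes it below -/
import Mathlib

section
/- Let A and M be symmetric positive definite real n×n matrices and let μ ≥ 0 be a nonnegative real number. Then for every nonzero vector v ∈ ℝⁿ, 1/2 ≤ (vᵀ(M A⁻¹ M + μ A)v) / (vᵀ(M + √μ A) A⁻¹ (M + √μ A)v) ≤ 1. -/
open Matrix

/-!
In the inner product `⟪x, y⟫ = xᴴ A⁻¹ y`, the numerator is `‖M v‖² + ‖√μ A v‖²` and the denominator
is `‖M v + √μ A v‖²`. Their difference is the cross term `2 √μ vᴴ M v ≥ 0`, which gives the upper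
bound, and the parallelogram law gives `‖x + y‖² ≤ 2 (‖x‖² + ‖y‖²)`, which is the lower bound.
-/

theorem add_smul_mul_inv_mul_add_smul {n R S : Type*} [Fintype n] [DecidableEq n] [CommRing R]
    [CommRing S] [Algebra R S] {A : Matrix n n S} (hA : IsUnit A) (M : Matrix n n S) (s : R) :
    (M + s • A) * A⁻¹ * (M + s • A) = M * A⁻¹ * M + s ^ 2 • A + (2 * s) • M := by
  have hdet : IsUnit A.det := A.isUnit_iff_isUnit_det.mp hA
  simp only [add_mul, mul_add, smul_mul_assoc, mul_smul_comm, mul_nonsing_inv A hdet,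
    nonsing_inv_mul_cancel_right A M hdet, one_mul]
  module

section RCLike

open scoped ComplexOrder MatrixOrder

variable {n 𝕜 : Type*} [Fintype n] [RCLike 𝕜]

theorem re_dotProduct_mulVec_mono {A B : Matrix n n 𝕜} (h : A ≤ B) (v : n → 𝕜) :
    RCLike.re (star v ⬝ᵥ (A *ᵥ v)) ≤ RCLike.re (star v ⬝ᵥ (B *ᵥ v)) := by
  have := (le_iff.mp h).re_dotProduct_nonneg v
  rwa [sub_mulVec, dotProduct_sub, map_sub, sub_nonneg] at this

theorem re_dotProduct_conjTranspose_mul_mul_mulVec_pos {m : Type*} [Fintype m] {A : Matrix n n 𝕜}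
    (hA : A.PosDef) {B : Matrix n m 𝕜} {v : m → 𝕜} (hv : B *ᵥ v ≠ 0) :
    0 < RCLike.re (star v ⬝ᵥ ((Bᴴ * A * B) *ᵥ v)) := by
  simpa only [star_mulVec, dotProduct_mulVec, vecMul_vecMul] using hA.re_dotProduct_pos hv

theorem add_smul_mulVec_ne_zero {A M : Matrix n n 𝕜} (hM : M.PosDef)
    (hA : A.PosSemidef) {s : ℝ} (hs : 0 ≤ s) {v : n → 𝕜} (hv : v ≠ 0) : (M + s • A) *ᵥ v ≠ 0 := by
  intro h
  simpa [h] using (hM.add_posSemidef (hA.smul hs)).re_dotProduct_pos hv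

variable [DecidableEq n] {A M : Matrix n n 𝕜}

theorem mul_inv_mul_add_le_add_smul_mul_inv_mul_add_smul (hA : IsUnit A) (hM : M.PosSemidef)
    {s : ℝ} (hs : 0 ≤ s) :
    M * A⁻¹ * M + s ^ 2 • A ≤ (M + s • A) * A⁻¹ * (M + s • A) := by
  rw [add_smul_mul_inv_mul_add_smul hA]
  exact le_add_of_nonneg_right (hM.smul (by positivity : 0 ≤ 2 * s)).nonneg

theorem add_smul_mul_inv_mul_add_smul_le_two_smul (hA : A.PosDef) (hM : M.IsHermitian) (s : ℝ) :
    (M + s • A) * A⁻¹ * (M + s • A) ≤ (2 : ℝ) • (M * A⁻¹ * M + s ^ 2 • A) := by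
  have hsub : (M + (-s) • A).IsHermitian := hM.add (hA.isHermitian.smul (.all _))
  have parallelogram : (2 : ℝ) • (M * A⁻¹ * M + s ^ 2 • A) - (M + s • A) * A⁻¹ * (M + s • A) =
      (M + (-s) • A) * A⁻¹ * (M + (-s) • A) := by
    simp only [add_smul_mul_inv_mul_add_smul hA.isUnit]
    module
  rw [le_iff, parallelogram]
  simpa only [hsub.eq] using hA.inv.posSemidef.conjTranspose_mul_mul_same (M + (-s) • A)

theorem pearson_wathen_general (hA : A.PosDef) (hM : M.PosSemidef) {μ : ℝ} (hμ : 0 ≤ μ)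
    {v : n → 𝕜} (hv : (M + √μ • A) *ᵥ v ≠ 0) :
    1 / 2 ≤ RCLike.re (star v ⬝ᵥ ((M * A⁻¹ * M + μ • A) *ᵥ v)) /
        RCLike.re (star v ⬝ᵥ (((M + √μ • A) * A⁻¹ * (M + √μ • A)) *ᵥ v)) ∧
      RCLike.re (star v ⬝ᵥ ((M * A⁻¹ * M + μ • A) *ᵥ v)) /
        RCLike.re (star v ⬝ᵥ (((M + √μ • A) * A⁻¹ * (M + √μ • A)) *ᵥ v)) ≤ 1 := by
  have hsum : (M + √μ • A).IsHermitian := hM.isHermitian.add (hA.isHermitian.smul (.all _))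
  have hpos := re_dotProduct_conjTranspose_mul_mul_mulVec_pos hA.inv hv
  have upper := re_dotProduct_mulVec_mono
    (mul_inv_mul_add_le_add_smul_mul_inv_mul_add_smul hA.isUnit hM (Real.sqrt_nonneg μ)) v
  have lower := re_dotProduct_mulVec_mono
    (add_smul_mul_inv_mul_add_smul_le_two_smul hA hM.isHermitian √μ) v
  rw [hsum.eq] at hpos
  rw [Real.sq_sqrt hμ] at upper lower
  rw [smul_mulVec, dotProduct_smul, RCLike.smul_re] at lower
  exact ⟨(le_div_iff₀ hpos).mpr (by linarith), (div_le_one hpos).mpr upper⟩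

end RCLike

/-- **Lemma (Pearson–Wathen).** Let `A` and `M` be symmetric positive definite real `n × n`
matrices and let `μ ≥ 0`. Then for every nonzero `v ∈ ℝⁿ`,
`1/2 ≤ (vᵀ (M A⁻¹ M + μ A) v) / (vᵀ (M + √μ A) A⁻¹ (M + √μ A) v) ≤ 1`. -/
theorem pearson_wathen {n : ℕ} (A M : Matrix (Fin n) (Fin n) ℝ)
    (hA : A.PosDef) (hM : M.PosDef) (μ : ℝ) (hμ : 0 ≤ μ)
    (v : Fin n → ℝ) (hv : v ≠ 0) :
    (1 / 2 : ℝ) ≤ (v ⬝ᵥ ((M * A⁻¹ * M + μ • A) *ᵥ v)) /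
        (v ⬝ᵥ (((M + Real.sqrt μ • A) * A⁻¹ * (M + Real.sqrt μ • A)) *ᵥ v)) ∧
      (v ⬝ᵥ ((M * A⁻¹ * M + μ • A) *ᵥ v)) /
        (v ⬝ᵥ (((M + Real.sqrt μ • A) * A⁻¹ * (M + Real.sqrt μ • A)) *ᵥ v)) ≤ 1 :=
  pearson_wathen_general hA hM.posSemidef hμ
    (add_smul_mulVec_ne_zero hM hA.posSemidef (Real.sqrt_nonneg μ) hv)
end

section
/- For every v ∈ V_p, the bilinear form B satisfies the coercivity identity B(v,v) = (1/2)‖v(1)‖²_M + (1/2)‖v(−1)‖²_M + (τ/2)∫_{−1}^{1} ‖v(s)‖²_A ds. -/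
open Matrix Polynomial

/-- The `k`-th Legendre polynomial (Rodrigues' formula), normalized so that `L_k(1) = 1`. -/
noncomputable def legendre (k : ℕ) : Polynomial ℝ :=
  ((2 ^ k * (Nat.factorial k) : ℝ))⁻¹ •
    ((fun q => Polynomial.derivative q)^[k] ((Polynomial.X ^ 2 - 1) ^ k))

/-- Evaluation at `s` of the `ℝⁿ`-valued polynomial with coefficients `c` (degree ≤ p). -/
noncomputable def pev {n p : ℕ} (c : Fin (p + 1) → Fin n → ℝ) (s : ℝ) : Fin n → ℝ :=
  ∑ j : Fin (p + 1), s ^ (j : ℕ) • c j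

/-- Evaluation at `s` of the derivative of the `ℝⁿ`-valued polynomial with coefficients `c`. -/
noncomputable def pdev {n p : ℕ} (c : Fin (p + 1) → Fin n → ℝ) (s : ℝ) : Fin n → ℝ :=
  ∑ j : Fin (p + 1), ((((j : ℕ) : ℝ)) * s ^ ((j : ℕ) - 1)) • c j

/-- Evaluation at `s` of `(I v)'`, the derivative of the reconstruction `I v` of the
`ℝⁿ`-valued polynomial `v` with coefficients `c`, where the reconstruction operator
`I v := v − v(−1)·(−1)^p (L_p − L_{p+1})/2` acts coefficientwise. -/
noncomputable def reconD {n p : ℕ} (c : Fin (p + 1) → Fin n → ℝ) (s : ℝ) : Fin n → ℝ :=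
  pdev c s -
    ((-1 : ℝ) ^ p * (Polynomial.derivative (legendre p - legendre (p + 1))).eval s / 2) •
      pev c (-1)

/-- The DG bilinear form `B(u, ·)` applied to a test function `g : ℝ → ℝⁿ`:
`B(u,g) = ∫_{−1}^{1} (u'(s), g(s))_M ds + (u(−1), g(−1))_M + (τ/2) ∫_{−1}^{1} (u(s), g(s))_A ds`,
where `(u,v)_M := vᵀ M u`. -/
noncomputable def Bform {n p : ℕ} (M A : Matrix (Fin n) (Fin n) ℝ) (τ : ℝ)
    (c : Fin (p + 1) → Fin n → ℝ) (g : ℝ → Fin n → ℝ) : ℝ :=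
  (∫ s in (-1 : ℝ)..1, g s ⬝ᵥ (M *ᵥ pdev c s)) + g (-1) ⬝ᵥ (M *ᵥ pev c (-1)) +
    (τ / 2) * ∫ s in (-1 : ℝ)..1, g s ⬝ᵥ (A *ᵥ pev c s)

/-- The operator `P v := A⁻¹ M (I v)' + (τ/2) v`, evaluated at `s`. -/
noncomputable def Pop {n p : ℕ} (M A : Matrix (Fin n) (Fin n) ℝ) (τ : ℝ)
    (c : Fin (p + 1) → Fin n → ℝ) (s : ℝ) : Fin n → ℝ :=
  (A⁻¹ * M) *ᵥ reconD c s + (τ / 2) • pev c s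

/-!
For a symmetric matrix `M`, the product rule gives `(v', v)_M = (1/2) (‖v‖²_M)'`, so the derivative
term of `B(v, v)` integrates to `(1/2)‖v(1)‖²_M - (1/2)‖v(-1)‖²_M`. The initial term `‖v(-1)‖²_M`
turns the negative boundary contribution into `(1/2)‖v(-1)‖²_M`.
-/

section Bilinear

variable {E F : Type*} [NormedAddCommGroup E] [NormedAddCommGroup F]

theorem hasDerivAt_bilinear_self {𝕜 : Type*} [NontriviallyNormedField 𝕜]
    [NormedSpace 𝕜 E] [NormedSpace 𝕜 F] {B : E →L[𝕜] E →L[𝕜] F} (hB : ∀ x y, B x y = B y x)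
    {u : 𝕜 → E} {u' : E} {s : 𝕜} (hu : HasDerivAt u u' s) :
    HasDerivAt (fun t => B (u t) (u t)) ((2 : 𝕜) • B (u s) u') s := by
  have product_rule : HasDerivAt (fun t => B (u t) (u t)) (B (u s) u' + B u' (u s)) s :=
    B.hasDerivAt_of_bilinear (fun _ => hu) (fun _ => hu)
  rwa [hB u', ← two_smul 𝕜] at product_rule

theorem integral_bilinear_self_deriv [NormedSpace ℝ E] [NormedSpace ℝ F] [CompleteSpace F]
    {B : E →L[ℝ] E →L[ℝ] F} (hB : ∀ x y, B x y = B y x) {u u' : ℝ → E} {a b : ℝ}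
    (hu : ∀ s ∈ Set.uIcc a b, HasDerivAt u (u' s) s)
    (hint : IntervalIntegrable (fun s => B (u s) (u' s)) MeasureTheory.volume a b) :
    ∫ s in a..b, B (u s) (u' s) = (1 / 2 : ℝ) • (B (u b) (u b) - B (u a) (u a)) := by
  have ftc : ∫ s in a..b, (2 : ℝ) • B (u s) (u' s) = B (u b) (u b) - B (u a) (u a) :=
    intervalIntegral.integral_eq_sub_of_hasDerivAt
      (fun s hs => hasDerivAt_bilinear_self hB (hu s hs)) (hint.smul (2 : ℝ))
  rw [← ftc, intervalIntegral.integral_smul, smul_smul]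
  norm_num

end Bilinear

theorem integral_dotProduct_mulVec_deriv {ι : Type*} [Fintype ι] {M : Matrix ι ι ℝ}
    (hM : M.IsSymm) {u u' : ℝ → ι → ℝ} {a b : ℝ}
    (hu : ∀ s ∈ Set.uIcc a b, HasDerivAt u (u' s) s)
    (hint : IntervalIntegrable (fun s => u s ⬝ᵥ (M *ᵥ u' s)) MeasureTheory.volume a b) :
    ∫ s in a..b, u s ⬝ᵥ (M *ᵥ u' s) =
      (1 / 2) * (u b ⬝ᵥ (M *ᵥ u b) - u a ⬝ᵥ (M *ᵥ u a)) := by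
  classical
  let B : (ι → ℝ) →L[ℝ] (ι → ℝ) →L[ℝ] ℝ := M.toBilin'.toContinuousBilinearMap
  have B_apply (x y : ι → ℝ) : B x y = x ⬝ᵥ (M *ᵥ y) := M.toBilin'_apply' x y
  have B_symm : ∀ x y, B x y = B y x := (isSymm_toBilin'_iff_isSymm.mpr hM).eq
  simp only [← B_apply] at hint ⊢
  exact integral_bilinear_self_deriv B_symm hu hint

section CoefficientPolynomials

variable {n p : ℕ} (c : Fin (p + 1) → Fin n → ℝ)

theorem hasDerivAt_pev (s : ℝ) : HasDerivAt (pev c) (pdev c s) s :=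
  HasDerivAt.fun_sum fun j _ => (hasDerivAt_pow (j : ℕ) s).smul_const (c j)

theorem continuous_pev : Continuous (pev c) :=
  continuous_iff_continuousAt.mpr fun s => (hasDerivAt_pev c s).continuousAt

theorem continuous_pdev : Continuous (pdev c) := by
  unfold pdev
  fun_prop

theorem integral_pev_dotProduct_mulVec_pdev {M : Matrix (Fin n) (Fin n) ℝ} (hM : M.IsSymm)
    (a b : ℝ) :
    ∫ s in a..b, pev c s ⬝ᵥ (M *ᵥ pdev c s) =
      (1 / 2) * (pev c b ⬝ᵥ (M *ᵥ pev c b) - pev c a ⬝ᵥ (M *ᵥ pev c a)) := by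
  have integrand_continuous : Continuous fun s => pev c s ⬝ᵥ (M *ᵥ pdev c s) :=
    (continuous_pev c).dotProduct (continuous_const.matrix_mulVec (continuous_pdev c))
  exact integral_dotProduct_mulVec_deriv hM (fun s _ => hasDerivAt_pev c s)
    (integrand_continuous.intervalIntegrable a b)

end CoefficientPolynomials

theorem coercivity_identity_general {n p : ℕ} {M : Matrix (Fin n) (Fin n) ℝ} (hM : M.IsSymm)
    (A : Matrix (Fin n) (Fin n) ℝ) (τ : ℝ) (c : Fin (p + 1) → Fin n → ℝ) :
    Bform M A τ c (fun s => pev c s)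
      = (1 / 2) * (pev c 1 ⬝ᵥ (M *ᵥ pev c 1)) + (1 / 2) * (pev c (-1) ⬝ᵥ (M *ᵥ pev c (-1))) +
        (τ / 2) * ∫ s in (-1 : ℝ)..1, pev c s ⬝ᵥ (A *ᵥ pev c s) := by
  rw [Bform, integral_pev_dotProduct_mulVec_pdev c hM]
  ring

/-- **Coercivity identity.** For every `v ∈ V_p`,
`B(v,v) = (1/2)‖v(1)‖²_M + (1/2)‖v(−1)‖²_M + (τ/2) ∫_{−1}^{1} ‖v(s)‖²_A ds`. -/
theorem coercivity_identity {n p : ℕ} (M A : Matrix (Fin n) (Fin n) ℝ)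
    (hM : M.PosDef) (hA : A.PosDef) (τ : ℝ) (hτ : 0 < τ)
    (c : Fin (p + 1) → Fin n → ℝ) :
    Bform M A τ c (fun s => pev c s)
      = (1 / 2) * (pev c 1 ⬝ᵥ (M *ᵥ pev c 1)) + (1 / 2) * (pev c (-1) ⬝ᵥ (M *ᵥ pev c (-1))) +
        (τ / 2) * ∫ s in (-1 : ℝ)..1, pev c s ⬝ᵥ (A *ᵥ pev c s) :=
  coercivity_identity_general (isHermitian_iff_isSymm.mp hM.isHermitian) A τ c
end

section
/- For every polynomial v of degree at most p, the reconstruction I v satisfies: (i) (I v)(1) = v(1); (ii) (I v)(−1) = 0; (iii) ∫_{−1}^{1} (I v)(s) w(s) ds = ∫_{−1}^{1} v(s) w(s) ds for every polynomial w of degree at most p−1. -/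
open Polynomial

/-- The reconstruction operator `I : P_p → P_{p+1}`,
`I v := v − v(−1)·(−1)^p (L_p − L_{p+1})/2`. -/
noncomputable def recon (p : ℕ) (v : Polynomial ℝ) : Polynomial ℝ :=
  v - (v.eval (-1) * (-1 : ℝ) ^ p / 2) • (legendre p - legendre (p + 1))

/-! The three properties amount to `L_k(1) = 1`, `L_k(-1) = (-1) ^ k` and `L_k ⟂ P_{k-1}`.
Rodrigues' formula makes `L_k` a multiple of the `k`-th derivative of `q ^ k`, `q = X ^ 2 - 1`, and
`q` vanishes at `±1`. At a root `a` of `q` that derivative is `k! q'(a) ^ k`, while all lower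
derivatives vanish, so `k` integrations by parts move every derivative onto the test polynomial
without boundary terms.
-/

theorem isRoot_iterate_derivative_pow {R : Type*} [CommSemiring R] {q : R[X]} {a : R}
    (hq : q.IsRoot a) {m k : ℕ} (hm : m < k) :
    (derivative^[m] (q ^ k)).IsRoot a :=
  hq.dvd <| (dvd_pow_self q (Nat.sub_ne_zero_of_lt hm)).trans
    (pow_sub_dvd_iterate_derivative_pow q k m)

theorem eval_iterate_derivative_pow_self {R : Type*} [CommRing R] {q : R[X]} {a : R}
    (hq : q.IsRoot a) (k : ℕ) :
    (derivative^[k] (q ^ k)).eval a = k.factorial * (derivative q).eval a ^ k := by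
  obtain ⟨r, rfl⟩ := dvd_iff_isRoot.mpr hq
  have eval_derivative : (derivative ((X - C a) * r)).eval a = r.eval a := by simp
  have eval_iterate := aeval_iterate_derivative_self (A := R) (((X - C a) * r) ^ k) k a
    (p' := r ^ k) (by simp [mul_pow])
  simpa [eval_derivative, nsmul_eq_mul] using eval_iterate

section Integral

variable {a b : ℝ}

theorem intervalIntegrable_eval_mul_eval (f g : ℝ[X]) :
    IntervalIntegrable (fun s => f.eval s * g.eval s) MeasureTheory.volume a b :=
  (f.continuous.mul g.continuous).intervalIntegrable a b

theorem integral_eval_sub_smul_mul_eval (f g w : ℝ[X]) (c : ℝ) :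
    ∫ s in a..b, (f - c • g).eval s * w.eval s =
      (∫ s in a..b, f.eval s * w.eval s) - c * ∫ s in a..b, g.eval s * w.eval s := by
  simp only [eval_sub, eval_smul, smul_eq_mul, sub_mul, mul_assoc]
  rw [intervalIntegral.integral_sub (intervalIntegrable_eval_mul_eval f w)
      ((intervalIntegrable_eval_mul_eval g w).const_mul c),
    intervalIntegral.integral_const_mul]

theorem integral_eval_derivative_mul_eval (f w : ℝ[X]) :
    ∫ s in a..b, (derivative f).eval s * w.eval s =
      f.eval b * w.eval b - f.eval a * w.eval a -
        ∫ s in a..b, f.eval s * (derivative w).eval s := by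
  rw [intervalIntegral.integral_mul_deriv_eq_deriv_mul
      (fun s _ => f.hasDerivAt s) (fun s _ => w.hasDerivAt s)
      ((derivative f).continuous.intervalIntegrable a b)
      ((derivative w).continuous.intervalIntegrable a b), sub_sub_cancel]

theorem integral_eval_iterate_derivative_mul_eval {f : ℝ[X]} {n : ℕ}
    (ha : ∀ m < n, (derivative^[m] f).IsRoot a) (hb : ∀ m < n, (derivative^[m] f).IsRoot b)
    (w : ℝ[X]) :
    ∫ s in a..b, (derivative^[n] f).eval s * w.eval s =
      (-1) ^ n * ∫ s in a..b, f.eval s * (derivative^[n] w).eval s := by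
  induction n generalizing w with
  | zero => simp
  | succ n ih =>
    rw [Function.iterate_succ_apply', integral_eval_derivative_mul_eval,
      (ha n n.lt_succ_self).eq_zero, (hb n n.lt_succ_self).eq_zero,
      ih (fun m hm => ha m (hm.trans n.lt_succ_self)) (fun m hm => hb m (hm.trans n.lt_succ_self)),
      ← Function.iterate_succ_apply]
    ring

end Integral

theorem eval_legendre_of_sq_eq_one {a : ℝ} (ha : a ^ 2 = 1) (k : ℕ) :
    (legendre k).eval a = a ^ k := by
  have isRoot : (X ^ 2 - 1 : ℝ[X]).IsRoot a := by simp [ha]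
  have eval_derivative : (derivative (X ^ 2 - 1 : ℝ[X])).eval a = 2 * a := by
    simp [one_add_one_eq_two]
  rw [legendre, eval_smul, eval_iterate_derivative_pow_self isRoot, eval_derivative, smul_eq_mul,
    mul_pow]
  field_simp

theorem integral_legendre_mul_eq_zero {k : ℕ} {w : ℝ[X]} (hw : w.degree < k) :
    ∫ s in (-1 : ℝ)..1, (legendre k).eval s * w.eval s = 0 := by
  have endpoint {a : ℝ} (ha : a ^ 2 = 1) :
      ∀ m < k, (derivative^[m] ((X ^ 2 - 1 : ℝ[X]) ^ k)).IsRoot a :=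
    fun m hm => isRoot_iterate_derivative_pow (by simp [ha]) hm
  simp only [legendre, eval_smul, smul_eq_mul, mul_assoc]
  rw [intervalIntegral.integral_const_mul,
    integral_eval_iterate_derivative_mul_eval (endpoint (by norm_num)) (endpoint (by norm_num)),
    iterate_derivative_eq_zero_of_degree_lt hw]
  simp

theorem eval_one_recon (p : ℕ) (v : ℝ[X]) : (recon p v).eval 1 = v.eval 1 := by
  simp [recon, eval_legendre_of_sq_eq_one]

theorem eval_neg_one_recon (p : ℕ) (v : ℝ[X]) : (recon p v).eval (-1) = 0 := by
  have eval_legendre (k : ℕ) : (legendre k).eval (-1) = (-1) ^ k :=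
    eval_legendre_of_sq_eq_one (by norm_num) k
  have sign_sq : (-1 : ℝ) ^ p * (-1) ^ p = 1 := by rw [← mul_pow]; simp
  simp only [recon, eval_sub, eval_smul, eval_legendre, smul_eq_mul, pow_succ]
  linear_combination -v.eval (-1) * sign_sq

theorem integral_recon_mul {p : ℕ} (v : ℝ[X]) {w : ℝ[X]} (hw : w.degree < p) :
    ∫ s in (-1 : ℝ)..1, (recon p v).eval s * w.eval s =
      ∫ s in (-1 : ℝ)..1, v.eval s * w.eval s := by
  have hw_succ : w.degree < (p + 1 : ℕ) := hw.trans (by exact_mod_cast p.lt_succ_self)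
  have orthogonal : ∫ s in (-1 : ℝ)..1, (legendre p - legendre (p + 1)).eval s * w.eval s = 0 := by
    simpa [integral_legendre_mul_eq_zero hw, integral_legendre_mul_eq_zero hw_succ] using
      integral_eval_sub_smul_mul_eval (a := -1) (b := 1) (legendre p) (legendre (p + 1)) w 1
  rw [recon, integral_eval_sub_smul_mul_eval, orthogonal, mul_zero, sub_zero]

theorem recon_properties_general (p : ℕ) (v : ℝ[X]) :
    (recon p v).eval 1 = v.eval 1 ∧ (recon p v).eval (-1) = 0 ∧
      ∀ w : ℝ[X], w.degree < p →
        ∫ s in (-1 : ℝ)..1, (recon p v).eval s * w.eval s =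
          ∫ s in (-1 : ℝ)..1, v.eval s * w.eval s :=
  ⟨eval_one_recon p v, eval_neg_one_recon p v, fun _ hw => integral_recon_mul v hw⟩

/-- **Properties of the reconstruction operator.** For every polynomial `v` of degree at most
`p`: (i) `(I v)(1) = v(1)`; (ii) `(I v)(−1) = 0`; (iii) `∫_{−1}^{1} (I v) w ds = ∫_{−1}^{1} v w ds`
for every polynomial `w` of degree at most `p − 1`. -/
theorem recon_properties (p : ℕ) (v : Polynomial ℝ) (hv : v.natDegree ≤ p) :
    (recon p v).eval 1 = v.eval 1 ∧ (recon p v).eval (-1) = 0 ∧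
      ∀ w : Polynomial ℝ, w.degree < (p : WithBot ℕ) →
        (∫ s in (-1 : ℝ)..1, (recon p v).eval s * w.eval s)
          = ∫ s in (-1 : ℝ)..1, v.eval s * w.eval s := by
  exact recon_properties_general p v
end

section
/- For all u, v ∈ V_p, the bilinear form B admits the equivalent representation B(u,v) = ∫_{−1}^{1} ((I u)'(s), v(s))_M ds + (τ/2) ∫_{−1}^{1} (u(s), v(s))_A ds. -/
open Matrix Polynomial

/-!
One has `(I u)' = u' − R' u(−1)`, where the right Radau polynomial `R` is orthogonal on `[−1, 1]` to
all polynomials of degree less than `p` and satisfies `R(−1) = 1`, `R(1) = 0`. Integrating `R'` by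
parts against `q` of degree at most `p`, the boundary term at `−1` is all that survives:
`∫ q R' = −q(−1)`. Applied to `q = (u(−1), v(·))_M`, this produces exactly the jump term
`(u(−1), v(−1))_M` of `B`. The orthogonality comes from Rodrigues' formula: `(X² − 1)^k` vanishes to
order `k` at `±1`, so integrating by parts `k` times leaves no boundary terms.
-/

lemma degree_derivative_lt_of_natDegree_le {R : Type*} [Semiring R] {q : R[X]} {p : ℕ}
    (hq : q.natDegree ≤ p) : (derivative q).degree < p := by
  rw [degree_lt_iff_coeff_zero]
  intro m hm
  rw [coeff_derivative, coeff_eq_zero_of_natDegree_lt (by omega), zero_mul]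

lemma eval_iterate_derivative_pow_eq_zero {R : Type*} [CommRing R] {f : R[X]} {x : R}
    (hx : f.eval x = 0) {j k : ℕ} (hjk : j < k) : (derivative^[j] (f ^ k)).eval x = 0 := by
  refine eval_eq_zero_of_dvd_of_eval_eq_zero (pow_sub_dvd_iterate_derivative_pow f k j) ?_
  rw [eval_pow, hx, zero_pow (Nat.sub_ne_zero_of_lt hjk)]

lemma eval_iterate_derivative_X_sub_C_pow_mul {R : Type*} [CommRing R] (x : R) (f : R[X]) (k : ℕ) :
    (derivative^[k] ((X - C x) ^ k * f)).eval x = k.factorial * f.eval x := by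
  rw [← coe_aeval_eq_eval, aeval_iterate_derivative_self _ k x Polynomial.map_id, nsmul_eq_mul,
    coe_aeval_eq_eval]

lemma integral_eval_mul_derivative (f g : ℝ[X]) (a b : ℝ) :
    ∫ s in a..b, f.eval s * (derivative g).eval s =
      f.eval b * g.eval b - f.eval a * g.eval a - ∫ s in a..b, (derivative f).eval s * g.eval s :=
  intervalIntegral.integral_mul_deriv_eq_deriv_mul
    (fun s _ => f.hasDerivAt s) (fun s _ => g.hasDerivAt s)
    ((derivative f).continuous.intervalIntegrable a b)
    ((derivative g).continuous.intervalIntegrable a b)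

lemma integral_eval_mul_iterate_derivative (f g : ℝ[X]) {a b : ℝ} {k : ℕ}
    (ha : ∀ j < k, (derivative^[j] g).eval a = 0) (hb : ∀ j < k, (derivative^[j] g).eval b = 0) :
    ∫ s in a..b, f.eval s * (derivative^[k] g).eval s =
      (-1) ^ k * ∫ s in a..b, (derivative^[k] f).eval s * g.eval s := by
  induction k generalizing f with
  | zero => simp
  | succ k ih =>
    rw [Function.iterate_succ_apply', integral_eval_mul_derivative, ha k k.lt_succ_self,
      hb k k.lt_succ_self, ih (derivative f) (fun j hj => ha j (hj.trans k.lt_succ_self))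
        (fun j hj => hb j (hj.trans k.lt_succ_self)), Function.iterate_succ_apply]
    ring

lemma legendre_eval_of_sq_eq_one (k : ℕ) {x : ℝ} (hx : x ^ 2 = 1) :
    (legendre k).eval x = x ^ k := by
  have factorization : (X ^ 2 - 1 : ℝ[X]) = (X - C x) * (X + C x) := by
    rw [← C_1, ← hx, C_pow]
    ring
  rw [legendre, factorization, mul_pow, eval_smul, eval_iterate_derivative_X_sub_C_pow_mul,
    eval_pow, eval_add, eval_X, eval_C, ← two_mul, mul_pow, smul_eq_mul]
  field_simp

lemma integral_eval_mul_legendre_eq_zero {q : ℝ[X]} {k : ℕ} (hq : q.degree < k) :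
    ∫ s in (-1 : ℝ)..1, q.eval s * (legendre k).eval s = 0 := by
  have vanish (x : ℝ) (hx : x ^ 2 = 1) (j : ℕ) (hj : j < k) :
      (derivative^[j] ((X ^ 2 - 1 : ℝ[X]) ^ k)).eval x = 0 :=
    eval_iterate_derivative_pow_eq_zero (by simp [hx]) hj
  have orthogonal := integral_eval_mul_iterate_derivative q ((X ^ 2 - 1) ^ k)
    (vanish (-1) (by norm_num)) (vanish 1 (by norm_num))
  rw [iterate_derivative_eq_zero_of_degree_lt hq] at orthogonal
  simp only [legendre, eval_smul, smul_eq_mul, mul_left_comm (q.eval _),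
    intervalIntegral.integral_const_mul, orthogonal, eval_zero, zero_mul,
    intervalIntegral.integral_zero, mul_zero]

/-- The right Radau polynomial of degree `p + 1`, scaled to be `1` at `−1` (it vanishes at `1`);
the reconstruction operator is `I v = v − v(−1) · rightRadau p`. -/
noncomputable def rightRadau (p : ℕ) : ℝ[X] :=
  C ((-1) ^ p / 2) * (legendre p - legendre (p + 1))

lemma rightRadau_eval_one (p : ℕ) : (rightRadau p).eval 1 = 0 := by
  simp [rightRadau, legendre_eval_of_sq_eq_one]

lemma rightRadau_eval_neg_one (p : ℕ) : (rightRadau p).eval (-1) = 1 := by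
  have sign : ((-1 : ℝ) ^ p) * (-1) ^ p = 1 := by rw [← mul_pow]; norm_num
  simp only [rightRadau, eval_mul, eval_C, eval_sub, legendre_eval_of_sq_eq_one _ neg_one_sq]
  linear_combination sign

lemma integral_eval_mul_rightRadau_eq_zero {q : ℝ[X]} {p : ℕ} (hq : q.degree < p) :
    ∫ s in (-1 : ℝ)..1, q.eval s * (rightRadau p).eval s = 0 := by
  have hq' : q.degree < (p + 1 : ℕ) := hq.trans (by exact_mod_cast p.lt_succ_self)
  have integrable (k : ℕ) : IntervalIntegrable (fun s => q.eval s * (legendre k).eval s)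
      MeasureTheory.volume (-1) 1 :=
    (q.continuous.mul (legendre k).continuous).intervalIntegrable _ _
  simp only [rightRadau, eval_mul, eval_C, eval_sub, mul_left_comm (q.eval _), mul_sub (q.eval _)]
  rw [intervalIntegral.integral_const_mul,
    intervalIntegral.integral_sub (integrable p) (integrable (p + 1)),
    integral_eval_mul_legendre_eq_zero hq, integral_eval_mul_legendre_eq_zero hq', sub_zero,
    mul_zero]

lemma integral_eval_mul_derivative_rightRadau {q : ℝ[X]} {p : ℕ} (hq : q.natDegree ≤ p) :
    ∫ s in (-1 : ℝ)..1, q.eval s * (derivative (rightRadau p)).eval s = -q.eval (-1) := by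
  rw [integral_eval_mul_derivative, rightRadau_eval_one, rightRadau_eval_neg_one,
    integral_eval_mul_rightRadau_eq_zero (degree_derivative_lt_of_natDegree_le hq)]
  ring

section Reconstruction

variable {m n p : ℕ}

lemma pev_continuous (c : Fin (p + 1) → Fin n → ℝ) : Continuous (pev c) := by
  unfold pev
  fun_prop

lemma pdev_continuous (c : Fin (p + 1) → Fin n → ℝ) : Continuous (pdev c) := by
  unfold pdev
  fun_prop

lemma reconD_eq_pdev_sub (c : Fin (p + 1) → Fin n → ℝ) (s : ℝ) :
    reconD c s = pdev c s - (derivative (rightRadau p)).eval s • pev c (-1) := by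
  rw [reconD, rightRadau, derivative_C_mul, eval_C_mul, div_mul_eq_mul_div]

lemma exists_natDegree_le_eval_eq_pev_dotProduct (d : Fin (p + 1) → Fin n → ℝ) (w : Fin n → ℝ) :
    ∃ q : ℝ[X], q.natDegree ≤ p ∧ ∀ s, q.eval s = pev d s ⬝ᵥ w := by
  refine ⟨∑ j : Fin (p + 1), C (d j ⬝ᵥ w) * X ^ (j : ℕ), ?_, fun s => ?_⟩
  · exact natDegree_sum_le_of_forall_le _ _ fun j _ =>
      (natDegree_C_mul_X_pow_le _ _).trans (Nat.le_of_lt_succ j.isLt)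
  · simp only [pev, eval_finsetSum, sum_dotProduct, smul_dotProduct, eval_C_mul, eval_pow, eval_X,
      smul_eq_mul, mul_comm (s ^ _)]

lemma integral_derivative_rightRadau_mul_pev_dotProduct
    (d : Fin (p + 1) → Fin n → ℝ) (w : Fin n → ℝ) :
    ∫ s in (-1 : ℝ)..1, (derivative (rightRadau p)).eval s * (pev d s ⬝ᵥ w) =
      -(pev d (-1) ⬝ᵥ w) := by
  obtain ⟨q, hq, hqd⟩ := exists_natDegree_le_eval_eq_pev_dotProduct d w
  simp only [← hqd, mul_comm _ (q.eval _)]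
  exact integral_eval_mul_derivative_rightRadau hq

lemma integral_pev_dotProduct_mulVec_reconD (M : Matrix (Fin m) (Fin n) ℝ)
    (c : Fin (p + 1) → Fin n → ℝ) (d : Fin (p + 1) → Fin m → ℝ) :
    ∫ s in (-1 : ℝ)..1, pev d s ⬝ᵥ (M *ᵥ reconD c s) =
      (∫ s in (-1 : ℝ)..1, pev d s ⬝ᵥ (M *ᵥ pdev c s)) + pev d (-1) ⬝ᵥ (M *ᵥ pev c (-1)) := by
  have continuous_main : Continuous fun s => pev d s ⬝ᵥ (M *ᵥ pdev c s) :=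
    (pev_continuous d).dotProduct (continuous_const.matrix_mulVec (pdev_continuous c))
  have continuous_correction : Continuous fun s =>
      (derivative (rightRadau p)).eval s * (pev d s ⬝ᵥ (M *ᵥ pev c (-1))) :=
    (derivative (rightRadau p)).continuous.mul ((pev_continuous d).dotProduct continuous_const)
  simp only [reconD_eq_pdev_sub, mulVec_sub, mulVec_smul, dotProduct_sub, dotProduct_smul,
    smul_eq_mul]
  rw [intervalIntegral.integral_sub (continuous_main.intervalIntegrable _ _)
    (continuous_correction.intervalIntegrable _ _),
    integral_derivative_rightRadau_mul_pev_dotProduct, sub_neg_eq_add]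

end Reconstruction

theorem Bform_recon_representation_general {n p : ℕ} (M A : Matrix (Fin n) (Fin n) ℝ) (τ : ℝ)
    (c d : Fin (p + 1) → Fin n → ℝ) :
    Bform M A τ c (fun s => pev d s)
      = (∫ s in (-1 : ℝ)..1, pev d s ⬝ᵥ (M *ᵥ reconD c s)) +
        (τ / 2) * ∫ s in (-1 : ℝ)..1, pev d s ⬝ᵥ (A *ᵥ pev c s) := by
  rw [Bform, integral_pev_dotProduct_mulVec_reconD]

/-- **Equivalent representation of the DG bilinear form.** For all `u, v ∈ V_p`,
`B(u,v) = ∫_{−1}^{1} ((I u)'(s), v(s))_M ds + (τ/2) ∫_{−1}^{1} (u(s), v(s))_A ds`. -/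
theorem Bform_recon_representation {n p : ℕ} (M A : Matrix (Fin n) (Fin n) ℝ)
    (hM : M.PosDef) (hA : A.PosDef) (τ : ℝ) (hτ : 0 < τ)
    (c d : Fin (p + 1) → Fin n → ℝ) :
    Bform M A τ c (fun s => pev d s)
      = (∫ s in (-1 : ℝ)..1, pev d s ⬝ᵥ (M *ᵥ reconD c s)) +
        (τ / 2) * ∫ s in (-1 : ℝ)..1, pev d s ⬝ᵥ (A *ᵥ pev c s) :=
  Bform_recon_representation_general M A τ c d
end

section
/- For every polynomial v of degree at most p, (I v)' is identically zero on (−1,1) if and only if v is identically zero on (−1,1). Consequently, the symmetric bilinear form (u,v) ↦ ∫_{−1}^{1} (I u)'(s) (I v)'(s) ds is positive definite on P_p. -/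
open Polynomial

/-!
If `v` has no term of degree `p + 1`, then the coefficient of that degree in `I v` comes from
`L_{p+1}` alone and is a nonzero multiple of `v(-1)`. If `(I v)' = 0`, then `I v` is constant, so
this coefficient vanishes and `v(-1) = 0`. Hence `I v = v`, and `v` is a constant vanishing at `-1`.
-/

theorem monic_X_sq_sub_one (R : Type*) [Ring R] : (X ^ 2 - 1 : R[X]).Monic :=
  monic_X_pow_sub_C (1 : R) two_ne_zero

theorem natDegree_X_sq_sub_one_pow (R : Type*) [Ring R] [Nontrivial R] (k : ℕ) :
    ((X ^ 2 - 1 : R[X]) ^ k).natDegree = k + k := by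
  rw [(monic_X_sq_sub_one R).natDegree_pow, ← C_1, natDegree_X_pow_sub_C, mul_two]

theorem coeff_legendre_self (k : ℕ) : (legendre k).coeff k = k.centralBinom / 2 ^ k := by
  have leadingCoeff_eq_one : ((X ^ 2 - 1 : ℝ[X]) ^ k).coeff (k + k) = 1 := by
    rw [← natDegree_X_sq_sub_one_pow ℝ]
    exact (monic_X_sq_sub_one ℝ).pow k
  rw [legendre, coeff_smul, coeff_iterate_derivative, leadingCoeff_eq_one,
    Nat.descFactorial_eq_factorial_mul_choose, ← two_mul, ← Nat.centralBinom_eq_two_mul_choose,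
    nsmul_one, smul_eq_mul, Nat.cast_mul]
  field_simp

theorem coeff_legendre_self_ne_zero (k : ℕ) : (legendre k).coeff k ≠ 0 := by
  rw [coeff_legendre_self]
  exact div_ne_zero (Nat.cast_ne_zero.2 k.centralBinom_ne_zero) (pow_ne_zero k two_ne_zero)

theorem natDegree_legendre_le (k : ℕ) : (legendre k).natDegree ≤ k :=
  calc (legendre k).natDegree
      ≤ (derivative^[k] ((X ^ 2 - 1 : ℝ[X]) ^ k)).natDegree := natDegree_smul_le _ _
    _ ≤ ((X ^ 2 - 1 : ℝ[X]) ^ k).natDegree - k := natDegree_iterate_derivative _ k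
    _ = k := by rw [natDegree_X_sq_sub_one_pow, Nat.add_sub_cancel]

theorem coeff_recon_succ (p : ℕ) (v : ℝ[X]) :
    (recon p v).coeff (p + 1) =
      v.coeff (p + 1) + v.eval (-1) * (-1) ^ p / 2 * (legendre (p + 1)).coeff (p + 1) := by
  have coeff_legendre : (legendre p).coeff (p + 1) = 0 :=
    coeff_eq_zero_of_natDegree_lt (Nat.lt_succ_of_le (natDegree_legendre_le p))
  rw [recon, coeff_sub, coeff_smul, coeff_sub, coeff_legendre, smul_eq_mul]
  ring

theorem recon_zero (p : ℕ) : recon p 0 = 0 := by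
  simp [recon]

theorem recon_eq_self_of_eval_neg_one_eq_zero (p : ℕ) {v : ℝ[X]} (hv : v.eval (-1) = 0) :
    recon p v = v := by
  simp [recon, hv]

theorem derivative_recon_eq_zero_iff {p : ℕ} {v : ℝ[X]} (hv : v.coeff (p + 1) = 0) :
    derivative (recon p v) = 0 ↔ v = 0 := by
  refine ⟨fun h => ?_, fun h => by rw [h, recon_zero, derivative_zero]⟩
  have recon_const : (recon p v).natDegree = 0 := derivative_eq_zero.1 h
  have eval_eq_zero : v.eval (-1) = 0 := by
    have coeff_eq_zero : (recon p v).coeff (p + 1) = 0 :=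
      coeff_eq_zero_of_natDegree_lt (recon_const ▸ p.succ_pos)
    simpa [coeff_recon_succ, hv, coeff_legendre_self_ne_zero] using coeff_eq_zero
  rw [recon_eq_self_of_eval_neg_one_eq_zero p eval_eq_zero] at recon_const
  obtain ⟨c, rfl⟩ := natDegree_eq_zero.1 recon_const
  rw [eval_C] at eval_eq_zero
  rw [eval_eq_zero, C_0]

theorem forall_mem_eval_eq_zero_iff {R : Type*} [CommRing R] [IsDomain R] {S : Set R}
    (hS : S.Infinite) {q : R[X]} : (∀ s ∈ S, q.eval s = 0) ↔ q = 0 :=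
  ⟨fun h => eq_zero_of_infinite_isRoot q (hS.mono h), fun h s _ => by rw [h, eval_zero]⟩

theorem integral_eval_mul_self_pos {a b : ℝ} (hab : a < b) {q : ℝ[X]} (hq : q ≠ 0) :
    0 < ∫ s in a..b, q.eval s * q.eval s := by
  obtain ⟨s, hs, hqs⟩ : ∃ s ∈ Set.Icc a b, q.eval s ≠ 0 := by
    by_contra! eval_eq_zero
    exact hq ((forall_mem_eval_eq_zero_iff (Set.Icc_infinite hab)).1 eval_eq_zero)
  exact intervalIntegral.integral_pos hab (q.continuous.mul q.continuous).continuousOn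
    (fun x _ => mul_self_nonneg (q.eval x)) ⟨s, hs, mul_self_pos.2 hqs⟩

theorem recon_deriv_vanishing_iff_general (p : ℕ) {a b : ℝ} (hab : a < b) :
    (∀ v : ℝ[X], v.coeff (p + 1) = 0 →
      ((∀ s ∈ Set.Ioo a b, (derivative (recon p v)).eval s = 0) ↔
        ∀ s ∈ Set.Ioo a b, v.eval s = 0)) ∧
    (∀ u v : ℝ[X],
      (∫ s in a..b, (derivative (recon p u)).eval s * (derivative (recon p v)).eval s) =
        ∫ s in a..b, (derivative (recon p v)).eval s * (derivative (recon p u)).eval s) ∧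
    (∀ v : ℝ[X], v.coeff (p + 1) = 0 → v ≠ 0 →
      0 < ∫ s in a..b, (derivative (recon p v)).eval s * (derivative (recon p v)).eval s) := by
  refine ⟨fun v hv => ?vanishing, fun u v => ?symmetric, fun v hv hv0 => ?positive⟩
  case vanishing =>
    have hI : (Set.Ioo a b).Infinite := Set.Ioo_infinite hab
    rw [forall_mem_eval_eq_zero_iff hI, forall_mem_eval_eq_zero_iff hI,
      derivative_recon_eq_zero_iff hv]
  case symmetric => simp only [mul_comm]
  case positive =>
    exact integral_eval_mul_self_pos hab ((derivative_recon_eq_zero_iff hv).not.2 hv0)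

/-- For every polynomial `v` of degree at most `p`, `(I v)'` vanishes identically on `(−1,1)`
if and only if `v` vanishes identically on `(−1,1)`. Consequently, the symmetric bilinear form
`(u,v) ↦ ∫_{−1}^{1} (I u)'(s) (I v)'(s) ds` is positive definite on `P_p`. -/
theorem recon_deriv_vanishing_iff (p : ℕ) :
    (∀ v : Polynomial ℝ, v.natDegree ≤ p →
      ((∀ s ∈ Set.Ioo (-1 : ℝ) 1, (Polynomial.derivative (recon p v)).eval s = 0) ↔
        ∀ s ∈ Set.Ioo (-1 : ℝ) 1, v.eval s = 0)) ∧
    (∀ u v : Polynomial ℝ,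
      (∫ s in (-1 : ℝ)..1,
          (Polynomial.derivative (recon p u)).eval s * (Polynomial.derivative (recon p v)).eval s)
        = ∫ s in (-1 : ℝ)..1,
            (Polynomial.derivative (recon p v)).eval s *
              (Polynomial.derivative (recon p u)).eval s) ∧
    (∀ v : Polynomial ℝ, v.natDegree ≤ p → v ≠ 0 →
      0 < ∫ s in (-1 : ℝ)..1,
        (Polynomial.derivative (recon p v)).eval s * (Polynomial.derivative (recon p v)).eval s) := by
  obtain ⟨vanishing, symmetric, positive⟩ :=
    recon_deriv_vanishing_iff_general p (neg_one_lt_zero.trans one_pos)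
  exact ⟨fun v hv => vanishing v (coeff_eq_zero_of_natDegree_lt (Nat.lt_succ_of_le hv)), symmetric,
    fun v hv => positive v (coeff_eq_zero_of_natDegree_lt (Nat.lt_succ_of_le hv))⟩
end
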